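/- There is a finite generating system S of the free group F_2 (namely any free generating system) such that for every finite generating system T of the free group F_4 and every ε ≥ 0, there is no ε-isometry between (F_2, d_S) and (F_4, d_T); indeed ω(F_2, S) = 3 while ω(F_4, T) ≥ 7 for every finite generating system T of F_4. -/

import Mathlib

/-!
A free basis of `F₂` has balls of size between `3 ^ k` and `2 * 3 ^ k` (count reduced words), which
gives `ω(F₂, S) = 3`. A finite generating set `T` of `F₄` contains four elements that are linearly
independent in the rational abelianization, and such elements freely generate a free subgroup
(`lift_injective_of_det`); hence `k`-balls of `T` have at least `7 ^ k` elements and `ω(F₄, T) ≥ 7`.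
A rough isometry would bound `k`-balls of `T` by a constant times `(k + e)`-balls of `S`
(`ncard_wball_le_of_rough`), which is impossible since `7 ^ k` outgrows every multiple of `3 ^ k`.

The freeness statement is a Hopfian argument. Let `φ` be the endomorphism of a free group `F` sending
the basis to the elements `t i`, with exponent-sum matrix of determinant `d ≠ 0`, and let `w ≠ 1`.
Choose a prime `p` not dividing `d`. The group `F` is residually `p` (`wordRep_ne_one`), so `w`
survives in a finite `p`-group `P`. Let `θ` be the product of all homomorphisms `F → P`. Its kernel
is invariant under `φ`, and its image is a finite `p`-group. Since `d` is prime to `p`, the subgroup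
`θ (φ F)` generates `θ F` modulo commutators (`mem_of_det`), hence equals it because `p`-groups are
nilpotent (`eq_top_of_sup_commutator`). Comparing indices, `θ` and `θ ∘ φ` have the same kernel,
so `φ w ≠ 1`.
-/

/-! Common definitions: word metrics, quasi-isometries, rough isometries. -/

/-- `g` is a product of `n` elements of `S ∪ S⁻¹`. -/
def IsWordProd {G : Type*} [Group G] (S : Set G) (g : G) (n : ℕ) : Prop :=
  ∃ l : List G, l.length = n ∧ (∀ s ∈ l, s ∈ S ∪ S⁻¹) ∧ l.prod = g

/-- The word metric associated to a generating system `S`: the least `n` such that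
`x⁻¹ * y` is a product of `n` elements of `S ∪ S⁻¹`. -/
noncomputable def wdist {G : Type*} [Group G] (S : Set G) (x y : G) : ℕ :=
  sInf {n | IsWordProd S (x⁻¹ * y) n}

/-- The word norm `‖g‖_S = d_S(e, g)`. -/
noncomputable def wnorm {G : Type*} [Group G] (S : Set G) (g : G) : ℕ :=
  wdist S 1 g

/-- `(η, η')` is a `(lam, eps)`-quasi-isometry between `(X, dX)` and `(Y, dY)`. -/
def IsQIPair {X Y : Type*} (dX : X → X → ℝ) (dY : Y → Y → ℝ)
    (η : X → Y) (η' : Y → X) (lam eps : ℝ) : Prop :=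
  (∀ x x' : X, lam⁻¹ * dX x x' - eps ≤ dY (η x) (η x') ∧
      dY (η x) (η x') ≤ lam * dX x x' + eps) ∧
  (∀ y y' : Y, lam⁻¹ * dY y y' - eps ≤ dX (η' y) (η' y') ∧
      dX (η' y) (η' y') ≤ lam * dY y y' + eps) ∧
  (∀ y : Y, dY (η (η' y)) y ≤ eps) ∧
  (∀ x : X, dX (η' (η x)) x ≤ eps)

/-- `(η, η')` is an `eps`-isometry between `(X, dX)` and `(Y, dY)`. -/
def IsEpsIsomPair {X Y : Type*} (dX : X → X → ℝ) (dY : Y → Y → ℝ)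
    (η : X → Y) (η' : Y → X) (eps : ℝ) : Prop :=
  (∀ x x' : X, |dX x x' - dY (η x) (η x')| ≤ eps) ∧
  (∀ y y' : Y, |dY y y' - dX (η' y) (η' y')| ≤ eps) ∧
  (∀ y : Y, dY (η (η' y)) y ≤ eps) ∧
  (∀ x : X, dX (η' (η x)) x ≤ eps)

/-- The real-valued word metric. -/
noncomputable def wdistR {G : Type*} [Group G] (S : Set G) (x y : G) : ℝ :=
  (wdist S x y : ℝ)

/-- The ball of radius `k` around the identity in the word metric of `S`. -/
def wball {G : Type*} [Group G] (S : Set G) (k : ℕ) : Set G :=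
  {g : G | wdist S 1 g ≤ k}

/-- The exponential growth rate `ω(G, S) = limsup_k (#B_{G,S}(k))^(1/k)`. -/
noncomputable def growthRate {G : Type*} [Group G] (S : Set G) : ℝ :=
  Filter.limsup (fun k : ℕ => ((wball S k).ncard : ℝ) ^ ((k : ℝ)⁻¹)) Filter.atTop

namespace RoughIsom

open Matrix

/-! ### Unitriangular matrices modulo `p` -/

section Unitriangular

variable {m : ℕ} {R : Type*} [CommRing R]

/-- A strictly upper triangular square matrix. -/
def StrictUpper (X : Matrix (Fin m) (Fin m) R) : Prop := ∀ i j, j ≤ i → X i j = 0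

lemma StrictUpper.mul {X Y : Matrix (Fin m) (Fin m) R} (hX : StrictUpper X)
    (hY : StrictUpper Y) : StrictUpper (X * Y) := by
  intro i j hij
  rw [Matrix.mul_apply]
  refine Finset.sum_eq_zero fun k _ => ?_
  rcases le_total k i with h | h
  · rw [hX i k h, zero_mul]
  · rw [hY k j (hij.trans h), mul_zero]

lemma StrictUpper.pow_apply {X : Matrix (Fin m) (Fin m) R} (hX : StrictUpper X) (k : ℕ) :
    ∀ i j : Fin m, (j : ℕ) < i + k → (X ^ k) i j = 0 := by
  induction k with
  | zero =>
    intro i j h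
    rw [pow_zero, Matrix.one_apply_ne]
    rintro rfl
    omega
  | succ k ih =>
    intro i j h
    rw [pow_succ, Matrix.mul_apply]
    refine Finset.sum_eq_zero fun l _ => ?_
    rcases lt_or_ge (l : ℕ) (i + k) with hl | hl
    · rw [ih i l hl, zero_mul]
    · rw [hX l j (by rw [Fin.le_def]; omega), mul_zero]

/-- Unitriangular matrices in characteristic `p` have exponent dividing `p ^ m`: by Frobenius
`(1 + X) ^ p ^ m = 1 + X ^ p ^ m`, and `X` is nilpotent of order at most `m`. -/
lemma unitri_pow {p : ℕ} [Fact p.Prime] [CharP R p] {A : Matrix (Fin m) (Fin m) R}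
    (hA : StrictUpper (A - 1)) : A ^ (p ^ m) = 1 := by
  rcases Nat.eq_zero_or_pos m with rfl | hm
  · exact Subsingleton.elim _ _
  have : Nonempty (Fin m) := ⟨⟨0, hm⟩⟩
  have h0 : (A - 1) ^ (p ^ m) = 0 := by
    ext i j
    refine hA.pow_apply _ i j ?_
    have := Nat.lt_pow_self (n := m) (Fact.out : p.Prime).one_lt
    omega
  have h1 := sub_pow_char_pow_of_commute p m (Commute.one_right A)
  rw [one_pow, h0] at h1
  exact (sub_eq_zero.mp h1.symm)

/-- The group of unitriangular matrices over `ZMod p`, a finite `p`-group. -/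
def unitriGroup (m p : ℕ) [Fact p.Prime] : Subgroup (Matrix (Fin m) (Fin m) (ZMod p))ˣ where
  carrier := {u | StrictUpper (u.val - 1)}
  one_mem' := by intro i j _; simp
  mul_mem' := by
    intro u v hu hv i j hij
    have : (u * v).val - 1 = (u.val - 1) * (v.val - 1) + (u.val - 1) + (v.val - 1) := by
      rw [Units.val_mul]; noncomm_ring
    rw [this, Matrix.add_apply, Matrix.add_apply, hu.mul hv i j hij, hu i j hij, hv i j hij]
    simp
  inv_mem' := by
    intro u hu
    have hpow : u ^ (p ^ m) = 1 := Units.ext (by simpa using unitri_pow (p := p) hu)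
    have hinv : u⁻¹ = u ^ (p ^ m - 1) := by
      rw [inv_eq_iff_mul_eq_one, ← pow_succ', Nat.sub_add_cancel, hpow]
      exact Nat.pos_of_ne_zero (pow_ne_zero _ (Fact.out : p.Prime).ne_zero)
    rw [hinv]
    have key : ∀ k : ℕ, StrictUpper ((u ^ k).val - 1) := by
      intro k
      induction k with
      | zero => intro i j _; simp
      | succ k ih =>
        have : (u ^ (k + 1)).val - 1 =
            ((u ^ k).val - 1) * (u.val - 1) + ((u ^ k).val - 1) + (u.val - 1) := by
          rw [pow_succ, Units.val_mul]; noncomm_ring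
        intro i j hij
        rw [this, Matrix.add_apply, Matrix.add_apply, ih.mul hu i j hij, ih i j hij, hu i j hij]
        simp
    exact key _

lemma unitriGroup_pow {m p : ℕ} [Fact p.Prime] (u : unitriGroup m p) : u ^ (p ^ m) = 1 :=
  Subtype.ext (Units.ext (by simpa using unitri_pow (p := p) u.2))

end Unitriangular

/-! ### Free groups are residually `p` -/

section Residual

variable {ι : Type*} (L : List (ι × Bool)) (p : ℕ) [Fact p.Prime]

open Classical in
/-- The nilpotent matrix moving position `i` of the word `L` to position `i + 1` whenever the
letter read there is `s`. -/
noncomputable def stepMat (s : ι × Bool) :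
    Matrix (Fin (L.length + 1)) (Fin (L.length + 1)) (ZMod p) :=
  fun i j => if (j : ℕ) = i + 1 ∧ L[(i : ℕ)]? = some s then 1 else 0

lemma stepMat_strictUpper (s : ι × Bool) : StrictUpper (stepMat L p s) := by
  intro i j hij
  rw [Fin.le_def] at hij
  rw [stepMat, if_neg]
  omega

/-- The unipotent `1 + stepMat L p s` as an element of the unitriangular group. -/
noncomputable def stepElt (s : ι × Bool) : unitriGroup (L.length + 1) p :=
  ⟨Units.ofPowEqOne (1 + stepMat L p s) (p ^ (L.length + 1))
    (unitri_pow (by simpa using stepMat_strictUpper L p s))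
    (pow_ne_zero _ (Fact.out : p.Prime).ne_zero), by
      change StrictUpper (1 + stepMat L p s - 1)
      simpa using stepMat_strictUpper L p s⟩

/-- The matrix underlying an element of the unitriangular group. -/
abbrev umat {m p : ℕ} [Fact p.Prime] (u : unitriGroup m p) : Matrix (Fin m) (Fin m) (ZMod p) :=
  u.val.val

lemma umat_stepElt (s : ι × Bool) : umat (stepElt L p s) = 1 + stepMat L p s := rfl

open Classical in
lemma vecMul_stepElt_succ (s : ι × Bool) (v : Fin (L.length + 1) → ZMod p) (j : ℕ)
    (hj : j + 1 < L.length + 1) :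
    (v ᵥ* umat (stepElt L p s)) ⟨j + 1, hj⟩ =
      v ⟨j + 1, hj⟩ + if L[j]? = some s then v ⟨j, by omega⟩ else 0 := by
  rw [umat_stepElt, Matrix.vecMul_add, Matrix.vecMul_one, Pi.add_apply]
  congr 1
  simp only [Matrix.vecMul, dotProduct]
  rw [Finset.sum_eq_single (⟨j, by omega⟩ : Fin (L.length + 1))]
  · simp [stepMat]
  · intro b _ hb
    rw [stepMat, if_neg, mul_zero]
    rintro ⟨h, -⟩
    simp only at h
    exact hb (Fin.ext (by simp; omega))
  · simp

/-- The row vector `v` is supported on positions `≤ t`, with entry `1` at position `t`. -/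
def Leads (t : ℕ) (v : Fin (L.length + 1) → ZMod p) : Prop :=
  ∀ j : Fin (L.length + 1), t ≤ j → v j = if (j : ℕ) = t then 1 else 0

/-- Reading the letter at position `t` moves the leading position from `t` to `t + 1`. -/
lemma Leads.step {t : ℕ} {v : Fin (L.length + 1) → ZMod p} (hv : Leads L p t v) {s : ι × Bool}
    (hs : L[t]? = some s) : Leads L p (t + 1) (v ᵥ* umat (stepElt L p s)) := by
  rintro ⟨j, hj⟩ htj
  obtain ⟨j, rfl⟩ : ∃ k, j = k + 1 := ⟨j - 1, by simp at htj; omega⟩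
  simp only at htj
  rw [vecMul_stepElt_succ, hv _ (by simp; omega), hv _ (by simp; omega)]
  rcases eq_or_ne j t with rfl | h
  · simp [hs]
  · have : ¬ (j + 1 = t) := by omega
    simp [h, this]

/-- A letter that occurs neither at position `t` nor at position `t + 1` preserves vectors leading
at `t + 1`. -/
lemma Leads.stay {t : ℕ} {v : Fin (L.length + 1) → ZMod p} (hv : Leads L p (t + 1) v)
    {s : ι × Bool} (hs : L[t]? ≠ some s) (hs' : L[t + 1]? ≠ some s) :
    Leads L p (t + 1) (v ᵥ* umat (stepElt L p s)) := by
  rintro ⟨j, hj⟩ htj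
  obtain ⟨j, rfl⟩ : ∃ k, j = k + 1 := ⟨j - 1, by simp at htj; omega⟩
  simp only at htj
  rw [vecMul_stepElt_succ, hv _ (by simp; omega)]
  rcases eq_or_ne j t with rfl | h
  · simp [hs]
  · rcases eq_or_ne j (t + 1) with rfl | h'
    · simp [hs']
    · rw [hv _ (by simp; omega)]
      simp [h, h']

lemma Leads.stay_inv {t : ℕ} {v : Fin (L.length + 1) → ZMod p} (hv : Leads L p (t + 1) v)
    {s : ι × Bool} (hs : L[t]? ≠ some s) (hs' : L[t + 1]? ≠ some s) :
    Leads L p (t + 1) (v ᵥ* umat (stepElt L p s)⁻¹) := by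
  -- the inverse is a positive power, because the group has finite exponent
  have hinv : (stepElt L p s)⁻¹ = (stepElt L p s) ^ (p ^ (L.length + 1) - 1) := by
    rw [inv_eq_iff_mul_eq_one, ← pow_succ', Nat.sub_add_cancel, unitriGroup_pow]
    exact Nat.pos_of_ne_zero (pow_ne_zero _ (Fact.out : p.Prime).ne_zero)
  rw [hinv]
  have key : ∀ k : ℕ, Leads L p (t + 1) (v ᵥ* umat (stepElt L p s ^ k)) := by
    intro k
    induction k with
    | zero => simpa [umat] using hv
    | succ k ih =>
      have : umat (stepElt L p s ^ (k + 1)) =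
          umat (stepElt L p s ^ k) * umat (stepElt L p s) := by
        simp [umat, pow_succ]
      rw [this, ← Matrix.vecMul_vecMul]
      exact ih.stay L p hs hs'
  exact key _

/-- The representation of the free group attached to the word `L`. The generator `a` acts by
`stepElt (a, true) * (stepElt (a, false))⁻¹`, so that its inverse has the same shape with the
signs exchanged. -/
noncomputable def wordRep : FreeGroup ι →* unitriGroup (L.length + 1) p :=
  FreeGroup.lift fun a => stepElt L p (a, true) * (stepElt L p (a, false))⁻¹

lemma wordRep_leads (hL : FreeGroup.IsReduced L) (t : ℕ) (ht : t ≤ L.length) :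
    Leads L p t ((Pi.single 0 1 : Fin (L.length + 1) → ZMod p) ᵥ*
      umat (wordRep L p (FreeGroup.mk (L.take t)))) := by
  induction t with
  | zero =>
    intro j _
    have : umat (wordRep L p (FreeGroup.mk (L.take 0))) = 1 := by
      have h1 : (FreeGroup.mk (L.take 0)) = 1 := by simp [FreeGroup.one_eq_mk]
      rw [h1, map_one]; rfl
    rw [this, Matrix.vecMul_one, Pi.single_apply]
    simp only [Fin.ext_iff, Fin.val_zero]
  | succ t ih =>
    have ih := ih (by omega)
    have ht' : t < L.length := by omega
    rcases hab : L[t] with ⟨a, b⟩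
    have hget : L[t]? = some (a, b) := by rw [List.getElem?_eq_getElem ht', hab]
    have hlet : wordRep L p (FreeGroup.mk [(a, b)]) =
        stepElt L p (a, b) * (stepElt L p (a, !b))⁻¹ := by
      rw [wordRep, FreeGroup.lift_mk]
      cases b <;> simp
    have hsplit : wordRep L p (FreeGroup.mk (L.take (t + 1))) =
        wordRep L p (FreeGroup.mk (L.take t)) *
          (stepElt L p (a, b) * (stepElt L p (a, !b))⁻¹) := by
      rw [← hlet, ← map_mul, FreeGroup.mul_mk, List.take_add_one, hget]
      rfl
    have hm : umat (wordRep L p (FreeGroup.mk (L.take (t + 1)))) =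
        umat (wordRep L p (FreeGroup.mk (L.take t))) * umat (stepElt L p (a, b)) *
          umat (stepElt L p (a, !b))⁻¹ := by
      rw [hsplit]; simp [umat, mul_assoc]
    rw [hm, ← Matrix.vecMul_vecMul, ← Matrix.vecMul_vecMul]
    refine Leads.stay_inv L p (ih.step L p hget) ?_ ?_
    · rw [hget]; cases b <;> simp
    · -- a reduced word has no letter followed by its inverse
      intro hn
      have hlt : t + 1 < L.length := by
        by_contra h
        rw [List.getElem?_eq_none (by omega)] at hn
        cases hn
      have hc := List.isChain_iff_getElem.mp hL t hlt
      rw [List.getElem?_eq_getElem hlt, Option.some.injEq] at hn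
      rw [hab, hn] at hc
      cases b <;> simp at hc

/-- Free groups are residually `p`: a reduced word `L` carries the first basis row vector to one
with entry `1` at position `L.length`. -/
lemma wordRep_ne_one (hL : FreeGroup.IsReduced L) (hne : L ≠ []) :
    wordRep L p (FreeGroup.mk L) ≠ 1 := by
  intro h
  have := wordRep_leads L p hL L.length le_rfl
  rw [List.take_length, h] at this
  have h2 := this (Fin.last _) (by simp)
  have h3 : umat (1 : unitriGroup (L.length + 1) p) = 1 := rfl
  have h4 : Fin.last L.length ≠ 0 := by
    simpa [Fin.ext_iff] using hne
  rw [h3, Matrix.vecMul_one, Pi.single_eq_of_ne h4] at h2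
  simp at h2

end Residual

end RoughIsom

namespace RoughIsom

/-! ### Free subgroups detected in the rational abelianization -/

section Hopf

/-- In a finite nilpotent group, a subgroup that generates modulo commutators is everything. -/
lemma eq_top_of_sup_commutator {Q : Type*} [Group Q] [Finite Q] [Group.IsNilpotent Q]
    {H : Subgroup Q} (h : H ⊔ commutator Q = ⊤) : H = ⊤ := by
  rcases eq_top_or_exists_le_coatom H with h' | ⟨M, hM, hHM⟩
  · exact h'
  exfalso
  have hN : M.Normal :=
    ((Group.isNilpotent_of_finite_tfae (G := Q)).out 0 2 rfl rfl).mp inferInstance M hM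
  have : Nontrivial (Q ⧸ M) := by
    rw [QuotientGroup.nontrivial_iff]; exact hM.1
  have hlt := Group.IsSolvable.commutator_lt_top_of_nontrivial (Q ⧸ M)
  -- the quotient by a maximal subgroup containing `H` would be a perfect nilpotent group
  refine hlt.ne ?_
  rw [eq_top_iff, ← Subgroup.map_top_of_surjective (QuotientGroup.mk' M)
    (QuotientGroup.mk'_surjective M), ← h, Subgroup.map_sup, sup_le_iff]
  constructor
  · rw [Subgroup.map_le_iff_le_comap]
    intro x hx
    have : QuotientGroup.mk' M x = 1 := (QuotientGroup.eq_one_iff x).mpr (hHM hx)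
    rw [Subgroup.mem_comap, this]
    exact one_mem _
  · rw [commutator_def, Subgroup.map_commutator, commutator_def]
    exact Subgroup.commutator_mono le_top le_top

variable {ι : Type*} [Fintype ι] [DecidableEq ι]

/-- The vector of exponent sums of a free group element. -/
def expSum : FreeGroup ι →* Multiplicative (ι → ℤ) :=
  FreeGroup.lift fun i => Multiplicative.ofAdd (Pi.single i 1)

/-- The matrix whose rows are the exponent sums of the elements `t i`. -/
def expMat (t : ι → FreeGroup ι) : Matrix ι ι ℤ := fun i j => (expSum (t i)).toAdd j

lemma map_eq_prod_expSum {C : Type*} [CommGroup C] (f : FreeGroup ι →* C) (w : FreeGroup ι) :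
    f w = ∏ j, f (FreeGroup.of j) ^ ((expSum w).toAdd j) := by
  let g : FreeGroup ι →* C := MonoidHom.mk' (fun w => ∏ j, f (FreeGroup.of j) ^
    ((expSum w).toAdd j)) (by
      intro a b
      simp [zpow_add, Finset.prod_mul_distrib])
  have : f = g := by
    ext i
    simp only [g, MonoidHom.mk'_apply, expSum, FreeGroup.lift_apply_of, toAdd_ofAdd]
    rw [Finset.prod_eq_single i]
    · simp
    · intro j _ hj
      simp [Pi.single_eq_of_ne hj]
    · simp
  exact DFunLike.congr_fun this w

/-- Cramer's rule: if a homomorphism to an abelian `p`-group maps the `t i` into `K`, and `p` does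
not divide the determinant of exponent sums, then it maps everything into `K`. -/
lemma mem_of_det {C : Type*} [CommGroup C] (f : FreeGroup ι →* C) (K : Subgroup C)
    (t : ι → FreeGroup ι) (p e : ℕ) [Fact p.Prime] (hC : ∀ c : C, c ^ p ^ e = 1)
    (hp : ¬ (p : ℤ) ∣ (expMat t).det) (hK : ∀ i, f (t i) ∈ K) (w : FreeGroup ι) : f w ∈ K := by
  have hgen : ∀ j, f (FreeGroup.of j) ∈ K := by
    intro j
    have h1 : ∏ i, f (t i) ^ ((expMat t).adjugate j i) =
        f (FreeGroup.of j) ^ (expMat t).det := by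
      have h2 : ∀ i, f (t i) ^ ((expMat t).adjugate j i) =
          ∏ k, f (FreeGroup.of k) ^ ((expMat t).adjugate j i * expMat t i k) := by
        intro i
        rw [map_eq_prod_expSum f (t i), ← Finset.prod_zpow]
        refine Finset.prod_congr rfl fun k _ => ?_
        rw [← zpow_mul, mul_comm]
        rfl
      simp_rw [h2]
      rw [Finset.prod_comm]
      have h3 : ∀ k, ∏ i, f (FreeGroup.of k) ^ ((expMat t).adjugate j i * expMat t i k) =
          f (FreeGroup.of k) ^ (((expMat t).det • (1 : Matrix ι ι ℤ)) j k) := by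
        intro k
        rw [← Matrix.adjugate_mul, Matrix.mul_apply]
        generalize f (FreeGroup.of k) = c
        exact (map_prod (zpowersHom C c) (fun i => Multiplicative.ofAdd
          ((expMat t).adjugate j i * expMat t i k)) Finset.univ).symm
      simp_rw [h3]
      rw [Finset.prod_eq_single j]
      · simp
      · intro k _ hk
        simp [Matrix.one_apply_ne hk.symm]
      · simp
    have h4 : f (FreeGroup.of j) ^ (expMat t).det ∈ K := by
      rw [← h1]
      exact Subgroup.prod_mem _ fun i _ => Subgroup.zpow_mem _ (hK i) _
    have hcop : IsCoprime ((expMat t).det) ((p : ℤ) ^ e) :=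
      (((Nat.prime_iff_prime_int.mp Fact.out).coprime_iff_not_dvd.mpr hp).symm).pow_right
    obtain ⟨a, b, hab⟩ := hcop
    have h5 : f (FreeGroup.of j) = (f (FreeGroup.of j) ^ (expMat t).det) ^ a := by
      conv_lhs => rw [← zpow_one (f (FreeGroup.of j)), ← hab, zpow_add, mul_comm b,
        zpow_mul _ _ b, mul_comm a, zpow_mul]
      have : f (FreeGroup.of j) ^ ((p : ℤ) ^ e) = 1 := by
        have := hC (f (FreeGroup.of j)); exact_mod_cast this
      rw [this, one_zpow, mul_one]
    rw [h5]
    exact Subgroup.zpow_mem _ h4 _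
  rw [map_eq_prod_expSum f w]
  exact Subgroup.prod_mem _ fun i _ => Subgroup.zpow_mem _ (hgen i) _

/-- Elements of a free group that are independent in the rational abelianization, as many as the
rank, freely generate. -/
theorem lift_injective_of_det (t : ι → FreeGroup ι) (hd : (expMat t).det ≠ 0) :
    Function.Injective (FreeGroup.lift t : FreeGroup ι →* FreeGroup ι) := by
  rw [injective_iff_map_eq_one]
  intro w hw
  by_contra hne
  obtain ⟨p, hpd, hpp⟩ := Nat.exists_infinite_primes ((expMat t).det.natAbs + 1)
  have : Fact p.Prime := ⟨hpp⟩
  have hp : ¬ (p : ℤ) ∣ (expMat t).det := by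
    intro h
    have := Nat.le_of_dvd (Int.natAbs_pos.mpr hd) (Int.natCast_dvd.mp h)
    omega
  set m := w.toWord.length + 1 with hm
  let P := unitriGroup m p
  -- `θ` collects all homomorphisms to `P`, so its kernel is preserved by every endomorphism
  let θ : FreeGroup ι →* ((ι → P) → P) := MonoidHom.pi fun g => FreeGroup.lift g
  let φ : FreeGroup ι →* FreeGroup ι := FreeGroup.lift t
  have : Finite θ.range := inferInstance
  have hpow : ∀ x : θ.range, x ^ p ^ m = 1 := by
    intro x
    ext1
    funext g
    simpa using unitriGroup_pow (x.1 g)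
  have hnil : Group.IsNilpotent θ.range :=
    IsPGroup.isNilpotent (p := p) fun x => ⟨m, hpow x⟩
  have hle : θ.ker ≤ (θ.comp φ).ker := by
    intro x hx
    rw [MonoidHom.mem_ker] at hx ⊢
    funext g
    have h1 := congrFun hx (fun i => FreeGroup.lift g (t i))
    have h2 : FreeGroup.lift (fun i => FreeGroup.lift g (t i)) =
        (FreeGroup.lift g : FreeGroup ι →* P).comp φ := by
      ext i; simp [φ]
    change FreeGroup.lift (fun i => FreeGroup.lift g (t i)) x = 1 at h1
    rw [h2] at h1
    exact h1
  have hsurj : Function.Surjective (θ.rangeRestrict.comp φ) := by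
    rw [← MonoidHom.range_eq_top]
    apply eq_top_of_sup_commutator
    set H := (θ.rangeRestrict.comp φ).range
    rw [eq_top_iff]
    intro y _
    obtain ⟨x, rfl⟩ := θ.rangeRestrict_surjective y
    have := mem_of_det (Abelianization.of.comp θ.rangeRestrict) (H.map Abelianization.of) t p m
      (by
        intro c
        obtain ⟨c, rfl⟩ := QuotientGroup.mk_surjective c
        change Abelianization.of c ^ _ = 1
        rw [← map_pow, hpow, map_one]) hp
      (fun i => ⟨_, ⟨FreeGroup.of i, rfl⟩, by simp [φ]⟩) x
    obtain ⟨z, hz, hzx⟩ := this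
    have hc : z⁻¹ * θ.rangeRestrict x ∈ commutator θ.range := by
      rw [← Abelianization.ker_of, MonoidHom.mem_ker, map_mul, map_inv, hzx]
      simp
    have := Subgroup.mul_mem_sup hz hc
    simpa using this
  have hrange : (θ.rangeRestrict.comp φ).range = ⊤ := MonoidHom.range_eq_top.mpr hsurj
  have hker' : (θ.rangeRestrict.comp φ).ker = (θ.comp φ).ker := by
    ext x
    simp [MonoidHom.mem_ker, Subtype.ext_iff]
  have hidx : (θ.comp φ).ker.index = θ.ker.index := by
    rw [← hker', Subgroup.index_ker, Subgroup.index_ker, hrange]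
    exact Nat.card_congr Subgroup.topEquiv.toEquiv
  have hfin : θ.ker.index ≠ 0 := by
    rw [Subgroup.index_ker]; exact Nat.card_pos.ne'
  have hrel : θ.ker.relIndex (θ.comp φ).ker = 1 := by
    have := Subgroup.relIndex_mul_index hle
    rw [hidx] at this
    exact Nat.eq_of_mul_eq_mul_right (Nat.pos_of_ne_zero hfin) (by rw [this, one_mul])
  have hw' : w ∈ θ.ker := by
    refine Subgroup.relIndex_eq_one.mp hrel ?_
    rw [MonoidHom.mem_ker, MonoidHom.comp_apply]
    simp only [φ, hw, map_one]
  refine wordRep_ne_one w.toWord p FreeGroup.isReduced_toWord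
    (by rwa [Ne, FreeGroup.toWord_eq_nil_iff]) ?_
  rw [FreeGroup.mk_toWord]
  exact congrFun hw' _

/-- A generating set of a free group of finite rank contains elements that freely generate a free
subgroup of the same rank. -/
theorem exists_free_subset {n : ℕ} (T : Set (FreeGroup (Fin n))) (hT : Subgroup.closure T = ⊤) :
    ∃ t : Fin n → FreeGroup (Fin n), (∀ i, t i ∈ T) ∧
      Function.Injective (FreeGroup.lift t : FreeGroup (Fin n) →* FreeGroup (Fin n)) := by
  let v : FreeGroup (Fin n) → (Fin n → ℚ) := fun w j => ((expSum w).toAdd j : ℚ)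
  have hspan : Submodule.span ℚ (v '' T) = ⊤ := by
    have hmem : ∀ w, v w ∈ Submodule.span ℚ (v '' T) := by
      intro w
      have hw : w ∈ Subgroup.closure T := hT ▸ Subgroup.mem_top w
      induction hw using Subgroup.closure_induction with
      | mem x hx => exact Submodule.subset_span ⟨x, hx, rfl⟩
      | one =>
        convert Submodule.zero_mem _
        funext j; simp [v]
      | mul x y _ _ hx hy =>
        convert Submodule.add_mem _ hx hy
        funext j; simp [v]
      | inv x _ hx =>
        convert Submodule.neg_mem _ hx
        funext j; simp [v]
    rw [eq_top_iff, ← (Pi.basisFun ℚ (Fin n)).span_eq, Submodule.span_le]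
    rintro _ ⟨i, rfl⟩
    rw [SetLike.mem_coe]
    convert hmem (FreeGroup.of i) using 1
    funext j
    simp [v, expSum, Pi.single_apply]
  obtain ⟨b, hbT, hb, hli⟩ := exists_linearIndependent ℚ (v '' T)
  rw [hspan] at hb
  let B : Module.Basis b ℚ (Fin n → ℚ) := Module.Basis.mk hli (by simpa using hb.ge)
  let e : b ≃ Fin n := B.indexEquiv (Pi.basisFun ℚ (Fin n))
  choose t htT htv using fun i : Fin n => hbT (e.symm i).2
  refine ⟨t, htT, lift_injective_of_det t ?_⟩
  have hli' : LinearIndependent ℚ (fun i => v (t i)) := by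
    have : (fun i => v (t i)) = (fun x : b => (x : Fin n → ℚ)) ∘ e.symm := funext htv
    rw [this]
    exact hli.comp _ e.symm.injective
  have hunit := (Matrix.linearIndependent_rows_iff_isUnit
    (A := (expMat t).map (Int.castRingHom ℚ))).mp hli'
  rw [Matrix.isUnit_iff_isUnit_det, isUnit_iff_ne_zero] at hunit
  intro h0
  apply hunit
  have := (Int.castRingHom ℚ).map_det (expMat t)
  rw [h0, map_zero] at this
  exact this.symm

end Hopf

end RoughIsom

namespace RoughIsom

/-! ### Counting reduced words -/

section Counting

variable {ι : Type*} [Fintype ι]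

open Classical in
/-- The reduced words of length `k`, enumerated by prepending letters. -/
noncomputable def redWords (ι : Type*) [Fintype ι] : ℕ → Finset (List (ι × Bool))
  | 0 => {[]}
  | k + 1 => (redWords ι k).biUnion fun l =>
      (Finset.univ.filter fun a => FreeGroup.IsReduced (a :: l)).image (· :: l)

lemma mem_redWords (k : ℕ) (l : List (ι × Bool)) :
    l ∈ redWords ι k ↔ FreeGroup.IsReduced l ∧ l.length = k := by
  induction k generalizing l with
  | zero =>
    simp only [redWords, Finset.mem_singleton, List.length_eq_zero_iff]
    constructor
    · rintro rfl; exact ⟨FreeGroup.IsReduced.nil, rfl⟩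
    · exact fun h => h.2
  | succ k ih =>
    simp only [redWords, Finset.mem_biUnion, Finset.mem_image, Finset.mem_filter,
      Finset.mem_univ, true_and]
    constructor
    · rintro ⟨l', hl', a, ha, rfl⟩
      exact ⟨ha, by simp [((ih l').mp hl').2]⟩
    · rintro ⟨h1, h2⟩
      cases l with
      | nil => simp at h2
      | cons a l =>
        refine ⟨l, (ih l).mpr ⟨List.IsChain.tail h1, by simpa using h2⟩, a, h1, rfl⟩

open Classical in
lemma card_redWords_succ' (k : ℕ) : (redWords ι (k + 1)).card =
    ∑ l ∈ redWords ι k, (Finset.univ.filter fun a => FreeGroup.IsReduced (a :: l)).card := by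
  rw [redWords, Finset.card_biUnion]
  · refine Finset.sum_congr rfl fun l _ => Finset.card_image_of_injective _ fun a b h => ?_
    simpa using h
  · intro l _ l' _ hne
    simp only [Function.onFun]
    rw [Finset.disjoint_left]
    rintro x hx hx'
    simp only [Finset.mem_image] at hx hx'
    obtain ⟨a, -, rfl⟩ := hx
    obtain ⟨b, -, h⟩ := hx'
    simp only [List.cons.injEq] at h
    exact hne h.2.symm

open Classical in
/-- A nonempty reduced word can be extended by every letter except the inverse of its head. -/
lemma card_extend (l : List (ι × Bool)) (hl : FreeGroup.IsReduced l) (hne : l ≠ []) :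
    (Finset.univ.filter fun a => FreeGroup.IsReduced (a :: l)).card = 2 * Fintype.card ι - 1 := by
  cases l with
  | nil => exact absurd rfl hne
  | cons b l =>
    have : (Finset.univ.filter fun a => FreeGroup.IsReduced (a :: b :: l)) =
        Finset.univ.erase (b.1, !b.2) := by
      ext ⟨a, s⟩
      obtain ⟨b, s'⟩ := b
      simp only [Finset.mem_filter, Finset.mem_univ, true_and, FreeGroup.isReduced_cons_cons, hl,
        Finset.mem_erase, ne_eq, Prod.mk.injEq, and_true]
      cases s <;> cases s' <;> simp
    rw [this, Finset.card_erase_of_mem (Finset.mem_univ _), Finset.card_univ, Fintype.card_prod,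
      Fintype.card_bool, mul_comm]

lemma card_redWords_succ (k : ℕ) : (redWords ι (k + 1)).card =
    2 * Fintype.card ι * (2 * Fintype.card ι - 1) ^ k := by
  induction k with
  | zero =>
    rw [card_redWords_succ']
    simp [redWords, FreeGroup.IsReduced.singleton, mul_comm]
  | succ k ih =>
    rw [card_redWords_succ', Finset.sum_congr rfl fun l hl => ?_, Finset.sum_const, ih,
      smul_eq_mul, pow_succ, mul_assoc]
    obtain ⟨h1, h2⟩ := (mem_redWords _ _).mp hl
    exact card_extend l h1 (by rintro rfl; simp at h2)

lemma le_card_redWords (k : ℕ) : (2 * Fintype.card ι - 1) ^ k ≤ (redWords ι k).card := by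
  cases k with
  | zero => simp [redWords]
  | succ k =>
    rw [card_redWords_succ, pow_succ, mul_comm]
    gcongr
    omega

lemma card_redWords_le_two (k : ℕ) :
    ((Finset.range (k + 1)).biUnion (redWords (Fin 2))).card ≤ 2 * 3 ^ k := by
  refine Finset.card_biUnion_le.trans ?_
  suffices h : ∑ j ∈ Finset.range (k + 1), (redWords (Fin 2) j).card + 1 = 2 * 3 ^ k by omega
  induction k with
  | zero => simp [redWords]
  | succ k ih =>
    rw [Finset.sum_range_succ, card_redWords_succ]
    simp only [Fintype.card_fin, Nat.reduceMul, Nat.reduceSub]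
    rw [pow_succ]
    omega

end Counting

/-! ### Balls in word metrics -/

section Balls

variable {G : Type*} [Group G]

lemma wdist_one_left (S : Set G) (x y : G) : wdist S x y = wdist S 1 (x⁻¹ * y) := by
  simp [wdist]

lemma exists_isWordProd {S : Set G} (hS : Subgroup.closure S = ⊤) (g : G) :
    ∃ n, IsWordProd S g n := by
  have hg : g ∈ Subgroup.closure S := hS ▸ Subgroup.mem_top g
  rw [← Subgroup.mem_toSubmonoid, Subgroup.closure_toSubmonoid] at hg
  obtain ⟨l, hl, hp⟩ := Submonoid.exists_list_of_mem_closure hg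
  exact ⟨l.length, l, rfl, hl, hp⟩

/-- For a generating set the infimum defining the word metric is attained. -/
lemma mem_wball_iff {S : Set G} (hS : Subgroup.closure S = ⊤) (g : G) (k : ℕ) :
    g ∈ wball S k ↔ ∃ n ≤ k, IsWordProd S g n := by
  have h1 : wdist S 1 g = sInf {n | IsWordProd S g n} := by simp [wdist]
  rw [wball, Set.mem_ofPred_eq, h1]
  constructor
  · exact fun h => ⟨_, h, Nat.sInf_mem (exists_isWordProd hS g)⟩
  · rintro ⟨n, hn, h⟩
    exact (Nat.sInf_le h).trans hn

open scoped Pointwise in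
lemma wball_subset_pow {S : Set G} (hS : Subgroup.closure S = ⊤) (k : ℕ) :
    wball S k ⊆ (insert 1 (S ∪ S⁻¹)) ^ k := by
  intro g hg
  obtain ⟨n, hn, l, hl, hlS, rfl⟩ := (mem_wball_iff hS g k).mp hg
  refine Set.pow_subset_pow_right (Set.mem_insert _ _) hn ?_
  subst hl
  clear hn hg
  induction l with
  | nil => simp
  | cons a l ih =>
    rw [List.prod_cons, List.length_cons, pow_succ']
    exact Set.mul_mem_mul (Set.mem_insert_of_mem _ (hlS a (by simp)))
      (ih fun s hs => hlS s (by simp [hs]))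

open scoped Pointwise in
lemma wball_finite_card {S : Set G} (hS : Subgroup.closure S = ⊤) (hf : S.Finite) :
    ∃ C : ℕ, ∀ k, (wball S k).Finite ∧ (wball S k).ncard ≤ C ^ k := by
  classical
  have hE : (insert 1 (S ∪ S⁻¹)).Finite := (hf.union hf.inv).insert 1
  refine ⟨hE.toFinset.card, fun k => ?_⟩
  have hsub : wball S k ⊆ ((hE.toFinset ^ k : Finset G) : Set G) := by
    rw [Finset.coe_pow, hE.coe_toFinset]
    exact wball_subset_pow hS k
  refine ⟨(Finset.finite_toSet _).subset hsub, ?_⟩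
  refine (Set.ncard_le_ncard hsub (Finset.finite_toSet _)).trans ?_
  rw [Set.ncard_coe_finset]
  exact Finset.card_pow_le

lemma isWordProd_lift {ι : Type*} {S : Set G} (t : ι → G) (ht : ∀ i, t i ∈ S)
    (l : List (ι × Bool)) : IsWordProd S (FreeGroup.lift t (FreeGroup.mk l)) l.length := by
  refine ⟨l.map fun x => bif x.2 then t x.1 else (t x.1)⁻¹, by simp, ?_, ?_⟩
  · intro s hs
    obtain ⟨⟨i, b⟩, -, rfl⟩ := List.mem_map.mp hs
    cases b
    · exact Or.inr (by simpa using ht i)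
    · exact Or.inl (ht i)
  · rw [FreeGroup.lift_mk]

/-- If `S` contains the free basis of a free subgroup of rank `n`, the `k`-ball contains the
`(2 n - 1) ^ k` or more elements represented by reduced words of length `k`. -/
lemma pow_le_ncard_wball {n : ℕ} {S : Set G} (hS : Subgroup.closure S = ⊤) (hf : S.Finite)
    (t : Fin n → G) (ht : ∀ i, t i ∈ S)
    (hinj : Function.Injective (FreeGroup.lift t : FreeGroup (Fin n) →* G)) (k : ℕ) :
    (2 * n - 1) ^ k ≤ (wball S k).ncard := by
  obtain ⟨C, hC⟩ := wball_finite_card hS hf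
  have h1 := le_card_redWords (ι := Fin n) k
  rw [Fintype.card_fin] at h1
  refine h1.trans ?_
  rw [← Set.ncard_coe_finset]
  refine Set.ncard_le_ncard_of_injOn (fun l => FreeGroup.lift t (FreeGroup.mk l)) ?_ ?_ (hC k).1
  · intro l hl
    obtain ⟨-, h2⟩ := (mem_redWords _ _).mp hl
    exact (mem_wball_iff hS _ k).mpr ⟨_, h2.le, isWordProd_lift t ht l⟩
  · intro l hl l' hl' h
    obtain ⟨h2, -⟩ := (mem_redWords _ _).mp hl
    obtain ⟨h3, -⟩ := (mem_redWords _ _).mp hl'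
    have h4 := FreeGroup.reduce.sound (hinj h)
    rwa [h2.reduce_eq, h3.reduce_eq] at h4

lemma closure_range_basis {ι : Type*} (b : FreeGroupBasis ι G) :
    Subgroup.closure (Set.range b) = ⊤ := by
  have h := congrArg (Subgroup.map b.repr.symm.toMonoidHom) (FreeGroup.closure_range_of ι)
  rw [MonoidHom.map_closure, ← Set.range_comp,
    Subgroup.map_top_of_surjective _ b.repr.symm.surjective] at h
  exact h

lemma basis_lift_injective {ι : Type*} (b : FreeGroupBasis ι G) :
    Function.Injective (FreeGroup.lift b : FreeGroup ι →* G) := by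
  have : (FreeGroup.lift b : FreeGroup ι →* G) = b.repr.symm.toMonoidHom := by
    ext i; rw [FreeGroup.lift_apply_of]; rfl
  rw [this]
  exact b.repr.symm.injective

/-- Elements of the `k`-ball of a free basis of rank two are represented by reduced words of
length at most `k`. -/
lemma ncard_wball_basis_le (b : FreeGroupBasis (Fin 2) G) (k : ℕ) :
    (wball (Set.range b) k).ncard ≤ 2 * 3 ^ k := by
  refine le_trans ?_ (card_redWords_le_two k)
  rw [← Set.ncard_coe_finset]
  refine Set.ncard_le_ncard_of_injOn (fun g => (b.repr g).toWord) ?_ ?_ (Finset.finite_toSet _)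
  · intro g hg
    obtain ⟨n, hn, l, rfl, hl, rfl⟩ := (mem_wball_iff (closure_range_basis b) g k).mp hg
    have hlen : (b.repr l.prod).norm ≤ l.length := by
      clear hn hg
      induction l with
      | nil => simp
      | cons a l ih =>
        rw [List.prod_cons, map_mul, List.length_cons, add_comm]
        refine (FreeGroup.norm_mul_le _ _).trans
          (Nat.add_le_add ?_ (ih fun s hs => hl s (by simp [hs])))
        rcases hl a (by simp) with ⟨i, rfl⟩ | ⟨i, hi⟩
        · have : b.repr (b i) = FreeGroup.of i := b.repr.apply_symm_apply _
          rw [this, FreeGroup.norm_of]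
        · have : b.repr (b i) = FreeGroup.of i := b.repr.apply_symm_apply _
          rw [← FreeGroup.norm_inv_eq, ← map_inv, ← hi, this, FreeGroup.norm_of]
    simp only [Finset.coe_biUnion, Set.mem_iUnion]
    refine ⟨(b.repr l.prod).norm, ?_, ?_⟩
    · simp; omega
    · exact (mem_redWords _ _).mpr ⟨FreeGroup.isReduced_toWord, rfl⟩
  · intro g _ g' _ h
    exact b.repr.injective (FreeGroup.toWord_injective h)

/-- A rough isometry into `(H, d_S)` bounds balls of `(G, d_T)` by slightly larger balls of
`(H, d_S)`, up to a multiplicative constant: fibres have bounded diameter. -/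
lemma ncard_wball_le_of_rough {H : Type*} [Group H] {T : Set G} {S : Set H}
    (hT : Subgroup.closure T = ⊤) (hTf : T.Finite) (hS : Subgroup.closure S = ⊤) (hSf : S.Finite)
    (f : G → H) (e : ℕ) (hf : ∀ y y', wdist S (f y) (f y') ≤ wdist T y y' + e)
    (hf' : ∀ y y', wdist T y y' ≤ wdist S (f y) (f y') + e) (k : ℕ) :
    (wball T k).ncard ≤ (wball T e).ncard * (wball S (k + e)).ncard := by
  classical
  obtain ⟨C, hC⟩ := wball_finite_card hT hTf
  obtain ⟨D, hD⟩ := wball_finite_card hS hSf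
  set A := (hC k).1.toFinset
  have hA : (wball T k).ncard = A.card := Set.ncard_eq_toFinset_card _ (hC k).1
  let F : G → H := fun y => (f 1)⁻¹ * f y
  have hself : ∀ h : H, wdist S h h = 0 := by
    intro h
    refine Nat.sInf_eq_zero.mpr (Or.inl ⟨[], rfl, by simp, by simp⟩)
  have h1 : A.card ≤ (wball T e).ncard * (A.image F).card := by
    refine Finset.card_le_mul_card_image A _ fun z hz => ?_
    obtain ⟨y₀, -, rfl⟩ := Finset.mem_image.mp hz
    rw [← Set.ncard_coe_finset]
    refine Set.ncard_le_ncard_of_injOn (fun y => y₀⁻¹ * y) ?_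
      (fun a _ b _ h => mul_left_cancel h) (hC e).1
    intro y hy
    have hy' := (Finset.mem_filter.mp (Finset.mem_coe.mp hy)).2
    have hfy : f y = f y₀ := mul_left_cancel hy'
    have := hf' y₀ y
    rw [hfy, hself, zero_add, wdist_one_left] at this
    exact this
  have h2 : (A.image F).card ≤ (wball S (k + e)).ncard := by
    rw [← Set.ncard_coe_finset]
    refine Set.ncard_le_ncard ?_ (hD _).1
    intro z hz
    obtain ⟨y, hy, rfl⟩ := Finset.mem_image.mp (Finset.mem_coe.mp hz)
    have hy1 : wdist T 1 y ≤ k := (hC k).1.mem_toFinset.mp hy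
    have := hf 1 y
    rw [wdist_one_left] at this
    change wdist S 1 _ ≤ _
    exact this.trans (by omega)
  rw [hA]
  exact h1.trans (Nat.mul_le_mul_left _ h2)

end Balls

/-! ### Growth rates -/

section Growth

open Filter Topology

lemma le_root {x : ℝ} {q : ℝ} (hq : 0 ≤ q) {k : ℕ} (hk : k ≠ 0) (h : q ^ k ≤ x) :
    q ≤ x ^ ((k : ℝ)⁻¹) := by
  rw [← Real.pow_rpow_inv_natCast hq hk]
  exact Real.rpow_le_rpow (by positivity) h (by positivity)

lemma root_le {x : ℝ} {q : ℝ} (hx : 0 ≤ x) (hq : 0 ≤ q) {k : ℕ} (hk : k ≠ 0) (h : x ≤ q ^ k) :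
    x ^ ((k : ℝ)⁻¹) ≤ q := by
  rw [← Real.pow_rpow_inv_natCast hq hk]
  exact Real.rpow_le_rpow hx h (by positivity)

lemma le_growthRate {G : Type*} [Group G] {S : Set G} (hS : Subgroup.closure S = ⊤)
    (hf : S.Finite) {q : ℕ} (h : ∀ k, q ^ k ≤ (wball S k).ncard) : (q : ℝ) ≤ growthRate S := by
  obtain ⟨C, hC⟩ := wball_finite_card hS hf
  refine le_limsup_of_frequently_le ?_ ?_
  · refine Eventually.frequently ?_
    filter_upwards [eventually_ne_atTop 0] with k hk
    exact le_root (Nat.cast_nonneg _) hk (by exact_mod_cast h k)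
  · refine ⟨C, ?_⟩
    rw [eventually_map]
    filter_upwards [eventually_ne_atTop 0] with k hk
    exact root_le (Nat.cast_nonneg _) (Nat.cast_nonneg _) hk (by exact_mod_cast (hC k).2)

lemma growthRate_eq_three {G : Type*} [Group G] {S : Set G}
    (h : ∀ k, 3 ^ k ≤ (wball S k).ncard) (h' : ∀ k, (wball S k).ncard ≤ 2 * 3 ^ k) :
    growthRate S = 3 := by
  refine Tendsto.limsup_eq ?_
  have hlim : Tendsto (fun k : ℕ => (2 : ℝ) ^ ((k : ℝ)⁻¹) * 3) atTop (𝓝 3) := by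
    have h1 : Tendsto (fun k : ℕ => (2 : ℝ) ^ ((k : ℝ)⁻¹)) atTop (𝓝 ((2 : ℝ) ^ (0 : ℝ))) :=
      tendsto_const_nhds.rpow tendsto_inv_atTop_nhds_zero_nat (Or.inl (by norm_num))
    simpa using h1.mul_const 3
  refine tendsto_of_tendsto_of_tendsto_of_le_of_le' tendsto_const_nhds hlim ?_ ?_
  · filter_upwards [eventually_ne_atTop 0] with k hk
    exact le_root (by norm_num) hk (by exact_mod_cast h k)
  · filter_upwards [eventually_ne_atTop 0] with k hk
    refine root_le (Nat.cast_nonneg _) (by positivity) hk ?_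
    rw [mul_pow, Real.rpow_inv_natCast_pow (by norm_num) hk]
    exact_mod_cast h' k

end Growth

end RoughIsom

open RoughIsom in
/-- For any free generating system `S` of `F₂`, the Cayley graph of
`(F₂, d_S)` is not `ε`-isometric to any Cayley graph of `F₄`, for any `ε ≥ 0`; indeed
`ω(F₂, S) = 3` while `ω(F₄, T) ≥ 7` for every finite generating system `T` of `F₄`. -/
theorem free_group_generating_system_not_roughly_isometric
    (b₂ : FreeGroupBasis (Fin 2) (FreeGroup (Fin 2))) :
    growthRate (Set.range b₂) = 3 ∧
    ∀ T : Set (FreeGroup (Fin 4)), T.Finite → Subgroup.closure T = ⊤ →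
      (7 : ℝ) ≤ growthRate T ∧
      ∀ eps : ℝ, 0 ≤ eps →
        ∀ (η : FreeGroup (Fin 2) → FreeGroup (Fin 4))
          (η' : FreeGroup (Fin 4) → FreeGroup (Fin 2)),
        ¬ IsEpsIsomPair (wdistR (Set.range b₂)) (wdistR T) η η' eps := by
  have hS := closure_range_basis b₂
  have hSf : (Set.range b₂).Finite := Set.finite_range _
  have hupper := ncard_wball_basis_le b₂
  refine ⟨growthRate_eq_three (pow_le_ncard_wball hS hSf b₂ (fun i => ⟨i, rfl⟩)
    (basis_lift_injective b₂)) hupper, fun T hTf hT => ?_⟩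
  obtain ⟨t, htT, ht⟩ := exists_free_subset T hT
  have hlower : ∀ k, 7 ^ k ≤ (wball T k).ncard := pow_le_ncard_wball hT hTf t htT ht
  refine ⟨by exact_mod_cast le_growthRate hT hTf hlower, ?_⟩
  rintro eps - η η' ⟨-, h, -, -⟩
  obtain ⟨e, he⟩ := exists_nat_ge eps
  have hrough := ncard_wball_le_of_rough hT hTf hS hSf η' e
    (fun y y' => by
      have h1 := (abs_le.mp (h y y')).1
      simp only [wdistR] at h1
      have : (wdist (Set.range b₂) (η' y) (η' y') : ℝ) ≤ wdist T y y' + e := by linarith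
      exact_mod_cast this)
    (fun y y' => by
      have h1 := (abs_le.mp (h y y')).2
      simp only [wdistR] at h1
      have : (wdist T y y' : ℝ) ≤ wdist (Set.range b₂) (η' y) (η' y') + e := by linarith
      exact_mod_cast this)
  set c := (wball T e).ncard
  -- `7 ^ k ≤ c * 2 * 3 ^ (k + e)` fails once `2 ^ k` exceeds `c * 2 * 3 ^ e`
  set M := c * (2 * 3 ^ e)
  have h1 : 7 ^ M ≤ M * 3 ^ M := by
    calc 7 ^ M ≤ _ := hlower M
      _ ≤ c * (wball (Set.range b₂) (M + e)).ncard := hrough M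
      _ ≤ c * (2 * 3 ^ (M + e)) := Nat.mul_le_mul_left _ (hupper _)
      _ = M * 3 ^ M := by simp only [M]; ring
  have h2 : M * 3 ^ M < 2 ^ M * 3 ^ M :=
    Nat.mul_lt_mul_of_pos_right Nat.lt_two_pow_self (by positivity)
  have h3 : 2 ^ M * 3 ^ M ≤ 7 ^ M := by
    rw [← mul_pow]; exact Nat.pow_le_pow_left (by norm_num) M
  omega
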